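/- Let L be a commutative subspace lattice on H, let Φ be a rank preserving linear map on Alg L, and let N ∈ L. Then N is isolated if and only if N is both consistent and twisted with respect to Φ. -/

import Mathlib

open scoped InnerProductSpace

noncomputable section

/-- The join (closed linear span) of a family of subspaces of a Hilbert space. -/
def closedJoin {H : Type*} [NormedAddCommGroup H] [InnerProductSpace ℂ H]
    (S : Set (Submodule ℂ H)) : Submodule ℂ H :=
  (sSup S).topologicalClosure

/-- A subspace lattice on `H`: a family of closed subspaces containing `{0}` and `H`,
closed under arbitrary intersections and arbitrary closed linear spans. -/
structure IsSubspaceLattice {H : Type*} [NormedAddCommGroup H] [InnerProductSpace ℂ H]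
    (L : Set (Submodule ℂ H)) : Prop where
  isClosed : ∀ E ∈ L, IsClosed (E : Set H)
  bot_mem : ⊥ ∈ L
  top_mem : ⊤ ∈ L
  sInf_mem : ∀ S : Set (Submodule ℂ H), S ⊆ L → sInf S ∈ L
  join_mem : ∀ S : Set (Submodule ℂ H), S ⊆ L → closedJoin S ∈ L

/-- `M₋`: the join of all members of `L` that do not contain `M`. -/
def minus {H : Type*} [NormedAddCommGroup H] [InnerProductSpace ℂ H]
    (L : Set (Submodule ℂ H)) (M : Submodule ℂ H) : Submodule ℂ H :=
  closedJoin {E | E ∈ L ∧ ¬ M ≤ E}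

open Classical in
/-- The orthogonal projection of `H` onto a closed subspace `E`, as an operator on `H`
(junk value `0` if `E` is not closed). -/
def projOf {H : Type*} [NormedAddCommGroup H] [InnerProductSpace ℂ H] [CompleteSpace H]
    (E : Submodule ℂ H) : H →L[ℂ] H :=
  if h : IsClosed (E : Set H) then
    haveI : CompleteSpace E := h.completeSpace_coe
    E.subtypeL.comp (Submodule.orthogonalProjectionOnto E)
  else 0

/-- A commutative subspace lattice: the orthogonal projections onto members commute. -/
structure IsCSL {H : Type*} [NormedAddCommGroup H] [InnerProductSpace ℂ H] [CompleteSpace H]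
    (L : Set (Submodule ℂ H)) extends IsSubspaceLattice L : Prop where
  commutes : ∀ E ∈ L, ∀ F ∈ L, projOf E * projOf F = projOf F * projOf E

/-- Complete distributivity of the lattice `L` (meets are intersections, joins are
closed linear spans). -/
def IsCompletelyDistributive {H : Type*} [NormedAddCommGroup H] [InnerProductSpace ℂ H]
    (L : Set (Submodule ℂ H)) : Prop :=
  ∀ (I : Type) (J : I → Type) (E : (i : I) → J i → Submodule ℂ H),
    (∀ i j, E i j ∈ L) →
     ((⨅ i, closedJoin (Set.range (E i)))
        = closedJoin (Set.range fun φ : (∀ i, J i) => ⨅ i, E i (φ i)))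
    ∧ (closedJoin (Set.range fun i => ⨅ j, E i j)
        = ⨅ φ : (∀ i, J i), closedJoin (Set.range fun i => E i (φ i)))

/-- `Alg L`: all bounded operators leaving every member of `L` invariant. -/
def algL {H : Type*} [NormedAddCommGroup H] [InnerProductSpace ℂ H]
    (L : Set (Submodule ℂ H)) : Set (H →L[ℂ] H) :=
  {T | ∀ E ∈ L, ∀ x ∈ E, T x ∈ E}

/-- The rank one operator `x ⊗ f* : h ↦ ⟨h, f⟩ x`. -/
def rankOne {H : Type*} [NormedAddCommGroup H] [InnerProductSpace ℂ H]
    (x f : H) : H →L[ℂ] H :=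
  (innerSL ℂ f).smulRight x

/-- The rank of a bounded operator: the dimension of its range. -/
def opRank {H : Type*} [NormedAddCommGroup H] [InnerProductSpace ℂ H]
    (T : H →L[ℂ] H) : Cardinal :=
  Module.rank ℂ (LinearMap.range (T : H →ₗ[ℂ] H))

/-- `Φ` is a linear map of `Alg L` into itself. -/
structure IsLinearOnAlg {H : Type*} [NormedAddCommGroup H] [InnerProductSpace ℂ H]
    (L : Set (Submodule ℂ H)) (Φ : (H →L[ℂ] H) → (H →L[ℂ] H)) : Prop where
  maps : ∀ A ∈ algL L, Φ A ∈ algL L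
  map_add : ∀ A ∈ algL L, ∀ B ∈ algL L, Φ (A + B) = Φ A + Φ B
  map_smul : ∀ (c : ℂ), ∀ A ∈ algL L, Φ (c • A) = c • Φ A

/-- `Φ` preserves the rank of every finite rank operator in `Alg L`. -/
def RankPreserving {H : Type*} [NormedAddCommGroup H] [InnerProductSpace ℂ H]
    (L : Set (Submodule ℂ H)) (Φ : (H →L[ℂ] H) → (H →L[ℂ] H)) : Prop :=
  ∀ A ∈ algL L, opRank A < Cardinal.aleph0 → opRank (Φ A) = opRank A

/-- `a ∼ b`: (nonzero) vectors `a` and `b` are linearly dependent. -/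
def Dep {H : Type*} [NormedAddCommGroup H] [InnerProductSpace ℂ H] (a b : H) : Prop :=
  ∃ c : ℂ, c ≠ 0 ∧ b = c • a

/-- `N` is consistent with respect to `Φ`. -/
def Consistent {H : Type*} [NormedAddCommGroup H] [InnerProductSpace ℂ H]
    (L : Set (Submodule ℂ H)) (Φ : (H →L[ℂ] H) → (H →L[ℂ] H))
    (N : Submodule ℂ H) : Prop :=
  N ≠ ⊥ ∧ minus L N ≠ ⊤ ∧
    ∃ (U : N →ₗ[ℂ] H) (V : ((minus L N)ᗮ : Submodule ℂ H) →ₗ[ℂ] H),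
      ∀ (x : N) (f : ((minus L N)ᗮ : Submodule ℂ H)),
        Φ (rankOne (x : H) (f : H)) = rankOne (U x) (V f)

/-- `N` is twisted with respect to `Φ`. -/
def Twisted {H : Type*} [NormedAddCommGroup H] [InnerProductSpace ℂ H]
    (L : Set (Submodule ℂ H)) (Φ : (H →L[ℂ] H) → (H →L[ℂ] H))
    (N : Submodule ℂ H) : Prop :=
  N ≠ ⊥ ∧ minus L N ≠ ⊤ ∧
    ∃ (U : ((minus L N)ᗮ : Submodule ℂ H) →ₗ⋆[ℂ] H) (V : N →ₗ⋆[ℂ] H),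
      ∀ (x : N) (f : ((minus L N)ᗮ : Submodule ℂ H)),
        Φ (rankOne (x : H) (f : H)) = rankOne (U f) (V x)

/-- `N` is isolated: `dim N = 1` and `N^⊥ ∈ L`. -/
def Isolated {H : Type*} [NormedAddCommGroup H] [InnerProductSpace ℂ H]
    (L : Set (Submodule ℂ H)) (N : Submodule ℂ H) : Prop :=
  Module.rank ℂ N = 1 ∧ Nᗮ ∈ L

/-- The family `F` of all `N ∈ L` with `N ≠ {0}` and `N₋ ≠ H`. -/
def famF {H : Type*} [NormedAddCommGroup H] [InnerProductSpace ℂ H]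
    (L : Set (Submodule ℂ H)) : Set (Submodule ℂ H) :=
  {N | N ∈ L ∧ N ≠ ⊥ ∧ minus L N ≠ ⊤}

/-- Subspaces are comparable if one contains the other. -/
def Comparable' {H : Type*} [NormedAddCommGroup H] [InnerProductSpace ℂ H]
    (M N : Submodule ℂ H) : Prop :=
  M ≤ N ∨ N ≤ M

/-- There is a chain in `F` from `M` to `N`. -/
def ChainConn {H : Type*} [NormedAddCommGroup H] [InnerProductSpace ℂ H]
    (L : Set (Submodule ℂ H)) (M N : Submodule ℂ H) : Prop :=
  ∃ (n : ℕ) (c : Fin (n + 1) → Submodule ℂ H),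
    (∀ k, c k ∈ famF L) ∧ c 0 = M ∧ c (Fin.last n) = N ∧
      ∀ k : Fin n, Comparable' (c k.castSucc) (c k.succ)

/-- `𝔊_N`: all members of `F` that can be connected to `N` by a chain. -/
def GSet {H : Type*} [NormedAddCommGroup H] [InnerProductSpace ℂ H]
    (L : Set (Submodule ℂ H)) (N : Submodule ℂ H) : Set (Submodule ℂ H) :=
  {M | M ∈ famF L ∧ ChainConn L N M}

end

/-!
If `N` is both consistent and twisted, then `Ux ⊗ (Vf)* = U'f ⊗ (V'x)*` for all `x ∈ N` and
`f ∈ N₋^⊥`. The left factor depends on `x` alone up to a scalar, and also on `f` alone, so the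
injective maps `U` and `V` take values in a line and `dim N = dim N₋^⊥ = 1`. Conversely, if both
dimensions are one, then the operators `x ⊗ f*` are the multiples of a single one and
`Φ(x ⊗ f*) = a(x) * conj (b(f)) • (u ⊗ v*)` with linear functionals `a`, `b`; the two scalars can be
distributed over the factors `u` and `v` in either way.

Being isolated is the same condition on dimensions: when `dim N = 1` and the projection onto `N`
commutes with the projections onto the members of the lattice, a member not containing `N` is
orthogonal to `N`. Hence `N ≤ N₋^⊥`, and equality holds exactly when `dim N₋^⊥ = 1`, as well as
exactly when `N^⊥ ∈ L`.
-/

section DimensionOne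

variable {K V : Type*} [DivisionRing K] [AddCommGroup V] [Module K V]

lemma rank_eq_one_of_injective_of_forall_mem_span_singleton
    {W : Type*} [AddCommGroup W] [Module K W] [Nontrivial V] {U : V →ₗ[K] W}
    (hU : Function.Injective U) {w : W} (hw : ∀ x, U x ∈ Submodule.span K {w}) :
    Module.rank K V = 1 := by
  refine le_antisymm ?_ (Cardinal.one_le_iff_pos.mpr rank_pos)
  have hrange : Module.rank K (LinearMap.range U) ≤ 1 :=
    (rank_submodule_le_one_iff' _).mpr ⟨w, LinearMap.range_le_iff_comap.mpr
      (eq_top_iff.mpr fun x _ => hw x)⟩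
  rwa [← Cardinal.lift_le_one_iff, lift_rank_range_of_injective U hU,
    Cardinal.lift_le_one_iff] at hrange

lemma exists_linearMap_smul_eq_of_rank_eq_one (hV : Module.rank K V = 1) :
    ∃ v : V, v ≠ 0 ∧ ∃ a : V →ₗ[K] K, ∀ x, a x • v = x := by
  let b := Module.basisUnique Unit (Module.rank_eq_one_iff_finrank_eq_one.mp hV)
  exact ⟨b default, b.ne_zero _, b.coord default, fun x => by simpa using b.sum_repr x⟩

end DimensionOne

section InnerProductSpace

variable {𝕜 E F : Type*} [RCLike 𝕜] [NormedAddCommGroup E] [InnerProductSpace 𝕜 E]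
  [NormedAddCommGroup F] [InnerProductSpace 𝕜 F]

lemma exists_eq_rankOne_of_rank_le_one [CompleteSpace E] {A : E →L[𝕜] F}
    (hA : A.toLinearMap.rank ≤ 1) : ∃ x y, A = InnerProductSpace.rankOne 𝕜 x y := by
  obtain ⟨x, hx⟩ := (rank_submodule_le_one_iff' _).mp hA
  refine ⟨(inner 𝕜 x x)⁻¹ • x,
    (InnerProductSpace.toDual 𝕜 E).symm (innerSL 𝕜 x ∘L A), ?_⟩
  ext z
  obtain ⟨c, hc⟩ := Submodule.mem_span_singleton.mp (hx ⟨z, rfl⟩)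
  obtain rfl | hx₀ := eq_or_ne x 0
  · simpa using hc.symm
  · have hxx : inner 𝕜 x x ≠ 0 := inner_self_ne_zero.mpr hx₀
    change c • x = A z at hc
    rw [InnerProductSpace.rankOne_apply, InnerProductSpace.toDual_symm_apply,
      ContinuousLinearMap.comp_apply, innerSL_apply_apply, ← hc, inner_smul_right, smul_smul,
      mul_assoc, mul_inv_cancel₀ hxx, mul_one]

lemma rank_eq_one_of_rankOne_eq_rankOne {V : Type*} [AddCommGroup V] [Module 𝕜 V] [Nontrivial V]
    {U : V →ₗ[𝕜] E} {W : V → F} {e : E} {f : F} (hf : f ≠ 0) (hU : ∀ x, x ≠ 0 → U x ≠ 0)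
    (h : ∀ x, InnerProductSpace.rankOne 𝕜 (U x) f = InnerProductSpace.rankOne 𝕜 e (W x)) :
    Module.rank 𝕜 V = 1 := by
  refine rank_eq_one_of_injective_of_forall_mem_span_singleton (U := U) (w := e)
    ((injective_iff_map_eq_zero U).mpr fun x hx => by_contra fun hx₀ => hU x hx₀ hx) fun x => ?_
  obtain rfl | hx := eq_or_ne x 0
  · simp
  · obtain ⟨α, -, -, -, hα, -⟩ :=
      InnerProductSpace.exists_of_rankOne_eq_rankOne (hU x hx) hf (h x)
    exact Submodule.mem_span_singleton.mpr ⟨α, hα.symm⟩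

lemma isOrtho_of_commute_starProjection_of_disjoint {M N : Submodule 𝕜 E}
    [M.HasOrthogonalProjection] [N.HasOrthogonalProjection]
    (hcomm : Commute M.starProjection N.starProjection) (hdisj : Disjoint M N) : M ⟂ N := by
  intro x hx
  rw [← Submodule.starProjection_apply_eq_zero_iff, ← Submodule.mem_bot 𝕜, ← hdisj.eq_bot]
  refine ⟨?_, N.starProjection_apply_mem x⟩
  have hxN : N.starProjection x = M.starProjection (N.starProjection x) := by
    simpa [Submodule.starProjection_eq_self_iff.mpr hx] using (DFunLike.congr_fun hcomm x).symm
  exact hxN ▸ M.starProjection_apply_mem _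

end InnerProductSpace

section SubspaceLattice

variable {H : Type*} [NormedAddCommGroup H] [InnerProductSpace ℂ H]
  {L : Set (Submodule ℂ H)} {N E : Submodule ℂ H}

lemma rankOne_eq_innerProductSpace_rankOne (x f : H) :
    rankOne x f = InnerProductSpace.rankOne ℂ x f := rfl

lemma rankOne_smul_smul (c d : ℂ) (x f : H) :
    rankOne (c • x) (d • f) = (c * starRingEnd ℂ d) • rankOne x f := by
  simp [rankOne_eq_innerProductSpace_rankOne, smul_smul]

lemma opRank_rankOne {x f : H} (hx : x ≠ 0) (hf : f ≠ 0) : opRank (rankOne x f) = 1 :=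
  InnerProductSpace.rank_rankOne hx hf

lemma projOf_eq_starProjection [CompleteSpace H] (hE : IsClosed (E : Set H))
    [E.HasOrthogonalProjection] : projOf E = E.starProjection :=
  dif_pos hE

lemma le_minus (hE : E ∈ L) (hNE : ¬ N ≤ E) : E ≤ minus L N :=
  (le_sSup (show E ∈ {E | E ∈ L ∧ ¬ N ≤ E} from ⟨hE, hNE⟩)).trans
    (Submodule.le_topologicalClosure _)

lemma isClosed_minus : IsClosed (minus L N : Set H) :=
  Submodule.isClosed_topologicalClosure _

lemma minus_le_iff (hE : IsClosed (E : Set H)) :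
    minus L N ≤ E ↔ ∀ F ∈ L, ¬ N ≤ F → F ≤ E := by
  constructor
  · exact fun h F hF hNF => (le_minus hF hNF).trans h
  · exact fun h => Submodule.topologicalClosure_minimal _ (sSup_le fun F hF => h F hF.1 hF.2) hE

lemma rankOne_mem_algL {x f : H} (hx : x ∈ N) (hf : f ∈ (minus L N)ᗮ) : rankOne x f ∈ algL L := by
  intro E hE z hz
  change inner ℂ f z • x ∈ E
  by_cases hNE : N ≤ E
  · exact E.smul_mem _ (hNE hx)
  · rw [Submodule.inner_left_of_mem_orthogonal (le_minus hE hNE hz) hf, zero_smul]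
    exact E.zero_mem

namespace IsSubspaceLattice

variable (hL : IsSubspaceLattice L)
include hL

lemma minus_mem (N : Submodule ℂ H) : minus L N ∈ L :=
  hL.join_mem _ fun _ hE => hE.1

variable [CompleteSpace H] (hN : N ∈ L) (hcomm : ∀ E ∈ L, Commute (projOf E) (projOf N))
include hN hcomm

lemma minus_le_orthogonal_of_isAtom (hatom : IsAtom N) : minus L N ≤ Nᗮ := by
  refine (minus_le_iff N.isClosed_orthogonal).mpr fun E hE hNE => ?_
  have hEcl := hL.isClosed E hE
  have hNcl := hL.isClosed N hN
  have := hEcl.completeSpace_coe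
  have := hNcl.completeSpace_coe
  have hproj := hcomm E hE
  rw [projOf_eq_starProjection hEcl, projOf_eq_starProjection hNcl] at hproj
  exact isOrtho_of_commute_starProjection_of_disjoint hproj
    (hatom.not_le_iff_disjoint.mp hNE).symm

theorem isolated_iff_rank_eq_one_and_rank_eq_one :
    Isolated L N ↔
      Module.rank ℂ N = 1 ∧ Module.rank ℂ ((minus L N)ᗮ : Submodule ℂ H) = 1 := by
  refine and_congr_right fun hN₁ => ?_
  have := (hL.isClosed N hN).completeSpace_coe
  have := (isClosed_minus (L := L) (N := N)).completeSpace_coe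
  have hfin := Module.rank_eq_one_iff_finrank_eq_one.mp hN₁
  have hatom : IsAtom N := Submodule.isAtom_iff_finrank_eq_one.mpr hfin
  have hle : minus L N ≤ Nᗮ := hL.minus_le_orthogonal_of_isAtom hN hcomm hatom
  constructor
  · intro hperp
    have hNperp : ¬ N ≤ Nᗮ := fun h => hatom.1 (Submodule.isOrtho_self.mp h)
    rw [hle.antisymm (le_minus hperp hNperp), Submodule.orthogonal_orthogonal, hN₁]
  · intro hM₁
    have hMfin := Module.rank_eq_one_iff_finrank_eq_one.mp hM₁
    have := Module.finite_of_finrank_eq_succ hMfin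
    have hNM : N = (minus L N)ᗮ :=
      Submodule.eq_of_le_of_finrank_eq (Submodule.le_orthogonal_iff_le_orthogonal.mp hle)
        (hfin.trans hMfin.symm)
    rw [hNM, Submodule.orthogonal_orthogonal]
    exact hL.minus_mem N

end IsSubspaceLattice

end SubspaceLattice

section Preservers

variable {H : Type*} [NormedAddCommGroup H] [InnerProductSpace ℂ H]
  {L : Set (Submodule ℂ H)} {Φ : (H →L[ℂ] H) → (H →L[ℂ] H)} {N : Submodule ℂ H}

/-- `Φ` preserves rank one operators of `Alg L`: the part of rank preservation that consistent and
twisted subspaces depend on. As in `RankPreserving`, the values of `Φ` outside `Alg L` are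
unconstrained. -/
def RankOnePreserving (L : Set (Submodule ℂ H)) (Φ : (H →L[ℂ] H) → (H →L[ℂ] H)) : Prop :=
  ∀ A ∈ algL L, opRank A = 1 → opRank (Φ A) = 1

lemma RankPreserving.rankOnePreserving (hΦ : RankPreserving L Φ) : RankOnePreserving L Φ :=
  fun A hA hA₁ => (hΦ A hA (hA₁ ▸ Cardinal.one_lt_aleph0)).trans hA₁

namespace RankOnePreserving

variable (hΦ : RankOnePreserving L Φ)
include hΦ

lemma opRank_apply_rankOne {x f : H} (hx : x ∈ N) (hf : f ∈ (minus L N)ᗮ) (hx₀ : x ≠ 0)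
    (hf₀ : f ≠ 0) : opRank (Φ (rankOne x f)) = 1 :=
  hΦ _ (rankOne_mem_algL hx hf) (opRank_rankOne hx₀ hf₀)

lemma apply_rankOne_ne_zero {x : N} {f : ((minus L N)ᗮ : Submodule ℂ H)} (hx : x ≠ 0)
    (hf : f ≠ 0) : Φ (rankOne (x : H) (f : H)) ≠ 0 := by
  intro h
  have hrank : opRank (Φ (rankOne (x : H) (f : H))) = 1 :=
    hΦ.opRank_apply_rankOne x.2 f.2 (by simpa using hx) (by simpa using hf)
  rw [h] at hrank
  exact zero_ne_one (LinearMap.rank_zero.symm.trans hrank)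

variable [CompleteSpace H]

theorem rank_eq_one_of_consistent_of_twisted (hcons : Consistent L Φ N) (htwist : Twisted L Φ N) :
    Module.rank ℂ N = 1 ∧ Module.rank ℂ ((minus L N)ᗮ : Submodule ℂ H) = 1 := by
  obtain ⟨hbot, htop, U, V, hUV⟩ := hcons
  obtain ⟨-, -, U', V', hUV'⟩ := htwist
  have := (isClosed_minus (L := L) (N := N)).completeSpace_coe
  have : Nontrivial N := Submodule.nontrivial_iff_ne_bot.mpr hbot
  have : Nontrivial ((minus L N)ᗮ : Submodule ℂ H) :=
    Submodule.nontrivial_iff_ne_bot.mpr (mt Submodule.orthogonal_eq_bot_iff.mp htop)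
  have heq x f : InnerProductSpace.rankOne ℂ (U x) (V f) =
      InnerProductSpace.rankOne ℂ (U' f) (V' x) := (hUV x f).symm.trans (hUV' x f)
  have hne {x f} (hx : x ≠ 0) (hf : f ≠ 0) : U x ≠ 0 ∧ V f ≠ 0 := by
    have hΦ₀ := hΦ.apply_rankOne_ne_zero hx hf
    rwa [hUV, rankOne_eq_innerProductSpace_rankOne, Ne, InnerProductSpace.rankOne_eq_zero,
      not_or] at hΦ₀
  obtain ⟨x₀, hx₀⟩ := exists_ne (0 : N)
  obtain ⟨f₀, hf₀⟩ := exists_ne (0 : ((minus L N)ᗮ : Submodule ℂ H))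
  exact ⟨rank_eq_one_of_rankOne_eq_rankOne (hne hx₀ hf₀).2 (fun _ hx => (hne hx hf₀).1)
      fun x => heq x f₀,
    rank_eq_one_of_rankOne_eq_rankOne (hne hx₀ hf₀).1 (fun _ hf => (hne hx₀ hf).2)
      fun f => InnerProductSpace.rankOne_eq_rankOne_iff_comm.mp (heq x₀ f)⟩

variable (hsmul : ∀ (c : ℂ), ∀ A ∈ algL L, Φ (c • A) = c • Φ A)
include hsmul

lemma exists_apply_rankOne_eq_smul_rankOne (hN : Module.rank ℂ N = 1)
    (hM : Module.rank ℂ ((minus L N)ᗮ : Submodule ℂ H) = 1) :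
    ∃ (a : Module.Dual ℂ N) (b : Module.Dual ℂ ((minus L N)ᗮ : Submodule ℂ H)) (u v : H),
      ∀ (x : N) (f : ((minus L N)ᗮ : Submodule ℂ H)),
        Φ (rankOne (x : H) (f : H)) = (a x * starRingEnd ℂ (b f)) • rankOne u v := by
  obtain ⟨e, he, a, ha⟩ := exists_linearMap_smul_eq_of_rank_eq_one hN
  obtain ⟨g, hg, b, hb⟩ := exists_linearMap_smul_eq_of_rank_eq_one hM
  obtain ⟨u, v, huv⟩ := exists_eq_rankOne_of_rank_le_one
    (hΦ.opRank_apply_rankOne e.2 g.2 (by simpa using he) (by simpa using hg)).le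
  refine ⟨a, b, u, v, fun x f => ?_⟩
  calc Φ (rankOne (x : H) (f : H))
      = Φ (rankOne (a x • (e : H)) (b f • (g : H))) := by
        rw [← Submodule.coe_smul, ← Submodule.coe_smul, ha, hb]
    _ = (a x * starRingEnd ℂ (b f)) • Φ (rankOne (e : H) (g : H)) := by
        rw [rankOne_smul_smul, hsmul _ _ (rankOne_mem_algL e.2 g.2)]
    _ = (a x * starRingEnd ℂ (b f)) • rankOne u v := by
        rw [huv, rankOne_eq_innerProductSpace_rankOne]

theorem consistent_and_twisted_of_rank_eq_one (hN : Module.rank ℂ N = 1)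
    (hM : Module.rank ℂ ((minus L N)ᗮ : Submodule ℂ H) = 1) :
    Consistent L Φ N ∧ Twisted L Φ N := by
  have hbot : N ≠ ⊥ := by
    rintro rfl
    exact zero_ne_one ((rank_bot ℂ H).symm.trans hN)
  have htop : minus L N ≠ ⊤ := by
    intro h
    rw [h, Submodule.top_orthogonal_eq_bot, rank_bot] at hM
    exact zero_ne_one hM
  obtain ⟨a, b, u, v, hab⟩ := hΦ.exists_apply_rankOne_eq_smul_rankOne hsmul hN hM
  let conj : ℂ →ₗ⋆[ℂ] ℂ := (starLinearEquiv ℂ : ℂ ≃ₗ⋆[ℂ] ℂ).toLinearMap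
  refine ⟨⟨hbot, htop, a.smulRight u, b.smulRight v, fun x f => ?_⟩,
    hbot, htop, (LinearMap.toSpanSingleton ℂ H u).comp (conj.comp b),
    (LinearMap.toSpanSingleton ℂ H v).comp (conj.comp a), fun x f => ?_⟩
  · rw [hab, LinearMap.smulRight_apply, LinearMap.smulRight_apply, rankOne_smul_smul]
  · have hswap := rankOne_smul_smul (starRingEnd ℂ (b f)) (starRingEnd ℂ (a x)) u v
    rw [Complex.conj_conj, mul_comm] at hswap
    exact (hab x f).trans hswap.symm

end RankOnePreserving

end Preservers

theorem stmt_6_general {H : Type*} [NormedAddCommGroup H] [InnerProductSpace ℂ H]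
    [CompleteSpace H] {L : Set (Submodule ℂ H)} (hL : IsSubspaceLattice L)
    {Φ : (H →L[ℂ] H) → (H →L[ℂ] H)} (hsmul : ∀ (c : ℂ), ∀ A ∈ algL L, Φ (c • A) = c • Φ A)
    (hrank : RankOnePreserving L Φ) {N : Submodule ℂ H} (hN : N ∈ L)
    (hcomm : ∀ E ∈ L, Commute (projOf E) (projOf N)) :
    Isolated L N ↔ (Consistent L Φ N ∧ Twisted L Φ N) := by
  rw [hL.isolated_iff_rank_eq_one_and_rank_eq_one hN hcomm]
  constructor
  · rintro ⟨hN₁, hM₁⟩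
    exact hrank.consistent_and_twisted_of_rank_eq_one hsmul hN₁ hM₁
  · rintro ⟨hcons, htwist⟩
    exact hrank.rank_eq_one_of_consistent_of_twisted hcons htwist

theorem stmt_6 {H : Type*} [NormedAddCommGroup H] [InnerProductSpace ℂ H]
    [CompleteSpace H] [TopologicalSpace.SeparableSpace H]
    (L : Set (Submodule ℂ H)) (hL : IsCSL L)
    (Φ : (H →L[ℂ] H) → (H →L[ℂ] H)) (hlin : IsLinearOnAlg L Φ)
    (hrank : RankPreserving L Φ)
    (N : Submodule ℂ H) (hN : N ∈ L) :
    Isolated L N ↔ (Consistent L Φ N ∧ Twisted L Φ N) :=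
  stmt_6_general hL.toIsSubspaceLattice hlin.map_smul hrank.rankOnePreserving hN
    fun E hE => hL.commutes E hE N hN
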